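/- Let a : Fin 4 → ℕ be a Pinwheel Scheduling instance with a 0 ≤ a 1 ≤ a 2 ≤ a 3. Then a is schedulable if and only if a dominates componentwise (is ≥ in every component) one of the six instances (2,4,8,8), (2,6,6,6), (3,3,6,6), (3,4,5,8), (3,5,5,5), (4,4,4,4). -/

import Mathlib

/-- A schedule `S` is valid for the Pinwheel Scheduling instance `a` if every task `i`
is executed at least once in every window of `a i` consecutive days. -/
def IsValidSchedule {k : ℕ} (a : Fin k → ℕ) (S : ℕ → Option (Fin k)) : Prop :=
  ∀ i : Fin k, ∀ t : ℕ, ∃ t', t ≤ t' ∧ t' < t + a i ∧ S t' = some i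

/-- A Pinwheel Scheduling instance is schedulable if some valid schedule exists. -/
def Schedulable {k : ℕ} (a : Fin k → ℕ) : Prop :=
  ∃ S : ℕ → Option (Fin k), IsValidSchedule a S

/-!
Sufficiency is witnessed by an explicit periodic schedule for each of the six instances.

For necessity, suppose a sorted instance dominates none of the six. Then it is bounded above by
`(3, 4, 5, 7)`, or its first few tasks are bounded above by `(1)`, `(2, 3)`, `(2, 5, 7)`,
`(3, 3, 5)` or `(3, 4, 4)`. These five shorter instances can be scheduled, but only without
holidays from some day on, so there is no room for a further task. Both obstructions show up
within a bounded number of days: whatever is executed, some deadline is missed, in the case of the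
shorter instances provided that one day is kept as a holiday.
-/

/-- Task `i` is executed by `S` on one of the `c` days `t, …, t + c - 1`: the deadline condition
behind `IsValidSchedule`. -/
def OccursWithin {k : ℕ} (S : ℕ → Option (Fin k)) (i : Fin k) (t c : ℕ) : Prop :=
  ∃ t', t ≤ t' ∧ t' < t + c ∧ S t' = some i

/-- An instance is holiday-free if each of its valid schedules has only finitely many holidays.
Such an instance cannot be extended by a further task. -/
def IsHolidayFree {k : ℕ} (a : Fin k → ℕ) : Prop :=
  ∀ S, IsValidSchedule a S → ∀ᶠ t in Filter.atTop, S t ≠ none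

/-- The bounded search for schedules: when task `i` is due within `d i` days from day `t` on, the
`n` days `t, …, t + n - 1` can be filled, with a holiday on each day in `closed`, so that no
deadline has passed by day `t + n - 1`. Executing task `i` resets its deadline to `a i`. -/
def Survivable {k : ℕ} (a : Fin k → ℕ) (closed : Finset ℕ) : ℕ → ℕ → (Fin k → ℕ) → Prop
  | 0, _, _ => True
  | n + 1, t, d => (∀ i, 0 < d i) ∧
      (Survivable a closed n (t + 1) (fun i ↦ d i - 1) ∨
        t ∉ closed ∧ ∃ j,
          Survivable a closed n (t + 1) (Function.update (fun i ↦ d i - 1) j (a j)))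

instance Survivable.decidable {k : ℕ} (a : Fin k → ℕ) (closed : Finset ℕ) :
    ∀ n t d, Decidable (Survivable a closed n t d)
  | 0, _, _ => .isTrue trivial
  | n + 1, t, _ =>
    have := Survivable.decidable a closed n (t + 1)
    inferInstanceAs (Decidable (_ ∧ _))

section

variable {k m : ℕ} {a b : Fin k → ℕ} {S : ℕ → Option (Fin k)}

namespace OccursWithin

variable {i : Fin k} {t c c' : ℕ}

lemma pos (h : OccursWithin S i t c) : 0 < c := by
  obtain ⟨s, hts, hsc, -⟩ := h
  omega

lemma mono (h : OccursWithin S i t c) (hc : c ≤ c') : OccursWithin S i t c' := by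
  obtain ⟨s, hts, hsc, hs⟩ := h
  exact ⟨s, hts, by omega, hs⟩

lemma succ_of_ne (h : OccursWithin S i t c) (hi : S t ≠ some i) :
    OccursWithin S i (t + 1) (c - 1) := by
  obtain ⟨s, hts, hsc, hs⟩ := h
  have hst : s ≠ t := fun hst ↦ hi (hst ▸ hs)
  exact ⟨s, by omega, by omega, hs⟩

end OccursWithin

namespace IsValidSchedule

lemma mono (hS : IsValidSchedule a S) (hab : a ≤ b) : IsValidSchedule b S :=
  fun i t ↦ OccursWithin.mono (hS i t) (hab i)

lemma shift (hS : IsValidSchedule a S) (u : ℕ) : IsValidSchedule a fun t ↦ S (u + t) := by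
  intro i t
  obtain ⟨s, hts, hsa, hs⟩ := hS i (u + t)
  have hus : u + (s - u) = s := by omega
  exact ⟨s - u, by omega, by omega, by simpa [hus]⟩

lemma frequently_eq_some (hS : IsValidSchedule a S) (i : Fin k) :
    ∃ᶠ t in Filter.atTop, S t = some i :=
  Filter.frequently_atTop.mpr fun t ↦
    let ⟨s, hts, _, hs⟩ := hS i t
    ⟨s, hts, hs⟩

lemma comp_embedding (hS : IsValidSchedule a S) (e : Fin m ↪ Fin k) :
    IsValidSchedule (a ∘ e) fun t ↦ (S t).bind (Function.partialInv e) := by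
  intro i t
  obtain ⟨s, hts, hsa, hs⟩ := hS (e i) t
  exact ⟨s, hts, hsa, by simp [hs, Function.partialInv_left e.injective]⟩

theorem survivable (hS : IsValidSchedule a S) {closed : Finset ℕ}
    (hclosed : ∀ t ∈ closed, S t = none) (n : ℕ) :
    ∀ t d, (∀ i, OccursWithin S i t (d i)) → Survivable a closed n t d := by
  induction n with
  | zero => exact fun _ _ _ ↦ trivial
  | succ n ih =>
    intro t d hd
    refine ⟨fun i ↦ (hd i).pos, ?_⟩
    cases hSt : S t with
    | none => exact .inl <| ih _ _ fun i ↦ (hd i).succ_of_ne (by simp [hSt])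
    | some j =>
      have hopen : t ∉ closed := fun ht ↦ by simp [hclosed t ht] at hSt
      refine .inr ⟨hopen, j, ih _ _ fun i ↦ ?_⟩
      obtain rfl | hij := eq_or_ne i j
      · rw [Function.update_self]
        exact hS i (t + 1)
      · simpa [hij] using (hd i).succ_of_ne (by simpa [hSt] using hij.symm)

end IsValidSchedule

lemma Schedulable.mono (ha : Schedulable a) (hab : a ≤ b) : Schedulable b :=
  let ⟨S, hS⟩ := ha
  ⟨S, hS.mono hab⟩

theorem schedulable_of_periodic {p : ℕ} [NeZero p] (w : Fin p → Fin k)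
    (hw : ∀ i r, ∃ c < a i, w (r + Fin.ofNat p c) = i) : Schedulable a := by
  refine ⟨fun t ↦ some (w (Fin.ofNat p t)), fun i t ↦ ?_⟩
  obtain ⟨c, hc, hwc⟩ := hw i (Fin.ofNat p t)
  have hadd : Fin.ofNat p (t + c) = Fin.ofNat p t + Fin.ofNat p c := by
    simp [Fin.ext_iff, Fin.val_add]
  exact ⟨t + c, by omega, by omega, congrArg some ((congrArg w hadd).trans hwc)⟩

theorem not_schedulable_of_not_survivable (n : ℕ) (h : ¬ Survivable a ∅ n 0 a) :
    ¬ Schedulable a :=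
  fun ⟨_, hS⟩ ↦ h <| hS.survivable (by simp) n 0 a fun i ↦ hS i 0

-- The search starts `h` days before a holiday, as it needs to see what precedes the holiday.
theorem isHolidayFree_of_not_survivable (h n : ℕ) (hn : ¬ Survivable a {h} n 0 a) :
    IsHolidayFree a := by
  intro S hS
  filter_upwards [Filter.eventually_ge_atTop h] with t ht hSt
  have hshift := hS.shift (t - h)
  refine hn <| hshift.survivable ?_ n 0 a fun i ↦ hshift i 0
  simpa [Nat.sub_add_cancel ht] using hSt

theorem Schedulable.not_comp_le (ha : Schedulable a) {b : Fin m → ℕ} (hb : IsHolidayFree b)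
    (hmk : m < k) (e : Fin m ↪ Fin k) : ¬ a ∘ e ≤ b := by
  obtain ⟨S, hS⟩ := ha
  intro hab
  obtain ⟨j, hj⟩ : ∃ j, ¬ ∃ i, e i = j := by
    by_contra! hsurj
    exact hmk.not_ge <| by simpa using Fintype.card_le_of_surjective e hsurj
  have hfree := hb _ ((hS.comp_embedding e).mono hab)
  obtain ⟨t, hSt, hne⟩ := ((hS.frequently_eq_some j).and_eventually hfree).exists
  exact hne <| by simp [hSt, Function.partialInv, hj]

lemma forall_vec_four_le_iff {α : Type*} [LE α] {p q r s : α} {f : Fin 4 → α} :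
    (∀ i, ![p, q, r, s] i ≤ f i) ↔ p ≤ f 0 ∧ q ≤ f 1 ∧ r ≤ f 2 ∧ s ≤ f 3 := by
  simp [Fin.forall_fin_succ]

end

-- The numbers of days in the searches below are the least that work.
lemma isHolidayFree_one : IsHolidayFree ![1] :=
  isHolidayFree_of_not_survivable 0 2 (by decide)

lemma isHolidayFree_two_three : IsHolidayFree ![2, 3] :=
  isHolidayFree_of_not_survivable 1 4 (by decide)

lemma isHolidayFree_two_five_seven : IsHolidayFree ![2, 5, 7] :=
  isHolidayFree_of_not_survivable 3 8 (by decide)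

lemma isHolidayFree_three_three_five : IsHolidayFree ![3, 3, 5] :=
  isHolidayFree_of_not_survivable 2 6 (by decide)

lemma isHolidayFree_three_four_four : IsHolidayFree ![3, 4, 4] :=
  isHolidayFree_of_not_survivable 2 6 (by decide)

lemma not_schedulable_three_four_five_seven : ¬ Schedulable ![3, 4, 5, 7] :=
  not_schedulable_of_not_survivable 21 (by decide +kernel)

theorem Schedulable.avoids_four_task_obstructions {a : Fin 4 → ℕ} (ha : Schedulable a) :
    ¬ a 0 ≤ 1 ∧ ¬ (a 0 ≤ 2 ∧ a 1 ≤ 3) ∧ ¬ (a 0 ≤ 2 ∧ a 1 ≤ 5 ∧ a 2 ≤ 7) ∧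
      ¬ (a 0 ≤ 3 ∧ a 1 ≤ 3 ∧ a 2 ≤ 5) ∧ ¬ (a 0 ≤ 3 ∧ a 1 ≤ 4 ∧ a 2 ≤ 4) ∧
      ¬ (a 0 ≤ 3 ∧ a 1 ≤ 4 ∧ a 2 ≤ 5 ∧ a 3 ≤ 7) := by
  have first_tasks {m : ℕ} {b : Fin m → ℕ} (hb : IsHolidayFree b) (hm : m < 4 := by decide) :
      ¬ ∀ i, a (Fin.castLE hm.le i) ≤ b i := ha.not_comp_le hb hm (Fin.castLEEmb hm.le)
  refine ⟨?_, ?_, ?_, ?_, ?_, ?_⟩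
  · simpa using first_tasks isHolidayFree_one
  · simpa [Fin.forall_fin_succ] using first_tasks isHolidayFree_two_three
  · simpa [Fin.forall_fin_succ] using first_tasks isHolidayFree_two_five_seven
  · simpa [Fin.forall_fin_succ] using first_tasks isHolidayFree_three_three_five
  · simpa [Fin.forall_fin_succ] using first_tasks isHolidayFree_three_four_four
  · simpa [Pi.le_def, Fin.forall_fin_succ] using
      fun hab : a ≤ ![3, 4, 5, 7] ↦ not_schedulable_three_four_five_seven (ha.mono hab)

lemma schedulable_two_four_eight_eight : Schedulable ![2, 4, 8, 8] :=
  schedulable_of_periodic ![0, 1, 0, 2, 0, 1, 0, 3] (by decide)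

lemma schedulable_two_six_six_six : Schedulable ![2, 6, 6, 6] :=
  schedulable_of_periodic ![0, 1, 0, 2, 0, 3] (by decide)

lemma schedulable_three_three_six_six : Schedulable ![3, 3, 6, 6] :=
  schedulable_of_periodic ![0, 1, 2, 0, 1, 3] (by decide)

lemma schedulable_three_four_five_eight : Schedulable ![3, 4, 5, 8] :=
  schedulable_of_periodic ![0, 3, 1, 0, 2, 0, 1, 2] (by decide)

lemma schedulable_three_five_five_five : Schedulable ![3, 5, 5, 5] :=
  schedulable_of_periodic ![0, 1, 0, 2, 3] (by decide)

lemma schedulable_four_four_four_four : Schedulable ![4, 4, 4, 4] :=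
  schedulable_of_periodic ![0, 1, 2, 3] (by decide)

theorem pareto_surface_four_tasks (a : Fin 4 → ℕ)
    (hsorted : a 0 ≤ a 1 ∧ a 1 ≤ a 2 ∧ a 2 ≤ a 3) :
    Schedulable a ↔
      ((∀ i, ![2, 4, 8, 8] i ≤ a i) ∨
       (∀ i, ![2, 6, 6, 6] i ≤ a i) ∨
       (∀ i, ![3, 3, 6, 6] i ≤ a i) ∨
       (∀ i, ![3, 4, 5, 8] i ≤ a i) ∨
       (∀ i, ![3, 5, 5, 5] i ≤ a i) ∨
       (∀ i, ![4, 4, 4, 4] i ≤ a i)) := by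
  constructor
  · intro ha
    have obstructions := ha.avoids_four_task_obstructions
    simp only [forall_vec_four_le_iff]
    grind
  · rintro (h | h | h | h | h | h)
    · exact schedulable_two_four_eight_eight.mono h
    · exact schedulable_two_six_six_six.mono h
    · exact schedulable_three_three_six_six.mono h
    · exact schedulable_three_four_five_eight.mono h
    · exact schedulable_three_five_five_five.mono h
    · exact schedulable_four_four_four_four.mono h
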